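/- Uniqueness for large elastic constant: for every c > 0 there exists l*(c) > 0 such that for every l > l*(c) the following holds. If (Q₁₁, Q₁₂, M₁, M₂) and (Q̄₁₁, Q̄₁₂, M̄₁, M̄₂) are two quadruples of functions ℝ → ℝ, each twice continuously differentiable on [−1,1], each satisfying on (−1,1) the system l·Q₁₁'' = 4Q₁₁(Q₁₁²+Q₁₂²−1) − c(M₁²−M₂²), l·Q₁₂'' = 4Q₁₂(Q₁₁²+Q₁₂²−1) − 2cM₁M₂, l·M₁'' = M₁(M₁²+M₂²−1) − 2cQ₁₁M₁ − 2cQ₁₂M₂, l·M₂'' = M₂(M₁²+M₂²−1) + 2cQ₁₁M₂ − 2cQ₁₂M₁, and each satisfying the boundary conditions Q₁₁(−1)=M₁(−1)=1, Q₁₁(1)=M₁(1)=−1, Q₁₂(±1)=M₂(±1)=0, then the two quadruples agree at every point of [−1,1]. -/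

import Mathlib

open Set

/-- A quadruple `(Q11, Q12, M1, M2)` is a classical solution of the ferronematic
Euler–Lagrange system on `[−1,1]` with elastic constant `l`, coupling `c` and
`ξ = 1`, with the given Dirichlet boundary conditions. -/
def FerroSolution (l c : ℝ) (Q11 Q12 M1 M2 : ℝ → ℝ) : Prop :=
  ContDiffOn ℝ 2 Q11 (Icc (-1) 1) ∧ ContDiffOn ℝ 2 Q12 (Icc (-1) 1) ∧
  ContDiffOn ℝ 2 M1 (Icc (-1) 1) ∧ ContDiffOn ℝ 2 M2 (Icc (-1) 1) ∧
  (∀ y ∈ Ioo (-1 : ℝ) 1, l * deriv (deriv Q11) y =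
    4 * Q11 y * ((Q11 y) ^ 2 + (Q12 y) ^ 2 - 1) - c * ((M1 y) ^ 2 - (M2 y) ^ 2)) ∧
  (∀ y ∈ Ioo (-1 : ℝ) 1, l * deriv (deriv Q12) y =
    4 * Q12 y * ((Q11 y) ^ 2 + (Q12 y) ^ 2 - 1) - 2 * c * M1 y * M2 y) ∧
  (∀ y ∈ Ioo (-1 : ℝ) 1, l * deriv (deriv M1) y =
    M1 y * ((M1 y) ^ 2 + (M2 y) ^ 2 - 1) - 2 * c * Q11 y * M1 y - 2 * c * Q12 y * M2 y) ∧
  (∀ y ∈ Ioo (-1 : ℝ) 1, l * deriv (deriv M2) y =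
    M2 y * ((M1 y) ^ 2 + (M2 y) ^ 2 - 1) + 2 * c * Q11 y * M2 y - 2 * c * Q12 y * M1 y) ∧
  Q11 (-1) = 1 ∧ M1 (-1) = 1 ∧ Q11 1 = -1 ∧ M1 1 = -1 ∧
  Q12 (-1) = 0 ∧ Q12 1 = 0 ∧ M2 (-1) = 0 ∧ M2 1 = 0

/-!
With `Q = Q₁₁ + i Q₁₂` and `M = M₁ + i M₂` the system is `l u'' = F(u)` for `u = (Q, M)` and
`F(Q, M) = (4(|Q|² - 1)Q - cM², (|M|² - 1)M - 2cQM̄)`, the gradient of the bulk energy.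

For any such `u`, `(|u|²)'' ≥ 2⟨u, u''⟩`. Since `⟨x, F(x)⟩ > 0` outside a ball whose radius
depends only on `c`, `|u|²` has no interior maximum outside that ball, so solutions satisfy an a
priori bound independent of `l`. On that ball `⟨x - y, F(x) - F(y)⟩ ≥ -C|x - y|²`, because the cubic
terms are monotone and the coupling is Lipschitz there. If `w` is the difference of two solutions on
`[a, b]` with equal boundary values and `m` is the maximum of `|w|²`, then
`l|w|² + Cm(y - a)(y - b)` is convex and vanishes at the endpoints; hence `lm ≤ Cm(b - a)²/4`,
which forces `m = 0` once `l > C(b - a)²/4`.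
-/

open Metric Topology
open scoped ComplexConjugate RealInnerProductSpace

section SecondDerivative

theorem deriv_deriv_nonpos_of_isLocalMax {f : ℝ → ℝ} {x : ℝ} (h : IsLocalMax f x)
    (hf : ContinuousAt f x) : deriv (deriv f) x ≤ 0 := by
  by_contra! hpos
  have hmin : IsLocalMin f x := isLocalMin_of_deriv_deriv_pos hpos h.deriv_eq_zero hf
  have hconst : f =ᶠ[𝓝 x] fun _ => f x := by
    filter_upwards [h, hmin] with z h₁ h₂ using le_antisymm h₁ h₂
  have hzero : deriv (deriv f) x = 0 := by simp [hconst.deriv.deriv_eq]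
  exact hpos.ne' hzero

theorem hasDerivAt_deriv_of_contDiffAt_two {𝕜 F : Type*} [NontriviallyNormedField 𝕜]
    [NormedAddCommGroup F] [NormedSpace 𝕜 F] {f : 𝕜 → F} {x : 𝕜} (hf : ContDiffAt 𝕜 2 f x) :
    HasDerivAt (deriv f) (deriv (deriv f) x) x := by
  have hderiv : ContDiffAt 𝕜 1 (deriv f) x :=
    (hf.fderiv_right (by norm_num)).clm_apply contDiffAt_const
  exact (hderiv.differentiableAt one_ne_zero).hasDerivAt

end SecondDerivative

section InnerProductSpace

variable {E : Type*} [NormedAddCommGroup E] [InnerProductSpace ℝ E]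

section Curves

variable {u u' u'' : ℝ → E} {a b : ℝ}

theorem hasDerivAt_two_mul_inner_deriv {y : ℝ} {v : E} (hu : HasDerivAt u (u' y) y)
    (hu' : HasDerivAt u' v y) :
    HasDerivAt (fun z => 2 * ⟪u z, u' z⟫) (2 * (⟪u y, v⟫ + ‖u' y‖ ^ 2)) y := by
  simpa only [real_inner_self_eq_norm_sq] using (hu.inner ℝ hu').const_mul 2

theorem norm_le_of_inner_deriv_deriv_pos {ρ : ℝ} (hu : ContinuousOn u (Icc a b))
    (hu' : ∀ y ∈ Ioo a b, HasDerivAt u (u' y) y)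
    (hu'' : ∀ y ∈ Ioo a b, HasDerivAt u' (u'' y) y)
    (hpos : ∀ y ∈ Ioo a b, ρ < ‖u y‖ → 0 < ⟪u y, u'' y⟫)
    (ha : ‖u a‖ ≤ ρ) (hb : ‖u b‖ ≤ ρ) {y : ℝ} (hy : y ∈ Icc a b) : ‖u y‖ ≤ ρ := by
  obtain ⟨y₀, hy₀, hmax⟩ := isCompact_Icc.exists_isMaxOn ⟨y, hy⟩ hu.norm
  refine (hmax hy).trans ?_
  by_contra! hlt
  have hint : y₀ ∈ Ioo a b :=
    ⟨lt_of_le_of_ne hy₀.1 (by rintro rfl; exact hlt.not_ge ha),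
      lt_of_le_of_ne hy₀.2 (by rintro rfl; exact hlt.not_ge hb)⟩
  have hlocal : IsLocalMax (fun z => ‖u z‖ ^ 2) y₀ := by
    filter_upwards [hmax.isLocalMax (Icc_mem_nhds hint.1 hint.2)] with z hz
    gcongr
  have hderiv : deriv (fun z => ‖u z‖ ^ 2) =ᶠ[𝓝 y₀] fun z => 2 * ⟪u z, u' z⟫ := by
    filter_upwards [Ioo_mem_nhds hint.1 hint.2] with z hz using (hu' z hz).norm_sq.deriv
  have hnonpos := deriv_deriv_nonpos_of_isLocalMax hlocal (hu' y₀ hint).norm_sq.continuousAt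
  rw [hderiv.deriv_eq,
    (hasDerivAt_two_mul_inner_deriv (hu' y₀ hint) (hu'' y₀ hint)).deriv] at hnonpos
  linarith [hpos y₀ hint hlt, sq_nonneg ‖u' y₀‖]

theorem convexOn_mul_norm_sq_add_mul {l k : ℝ} (hl : 0 ≤ l) (hu : ContinuousOn u (Icc a b))
    (hu' : ∀ y ∈ Ioo a b, HasDerivAt u (u' y) y)
    (hu'' : ∀ y ∈ Ioo a b, HasDerivAt u' (u'' y) y)
    (hk : ∀ y ∈ Ioo a b, -k ≤ l * ⟪u y, u'' y⟫) :
    ConvexOn ℝ (Icc a b) fun y => l * ‖u y‖ ^ 2 + k * ((y - a) * (y - b)) := by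
  refine convexOn_of_hasDerivWithinAt2_nonneg (convex_Icc a b)
    (f' := fun y => l * (2 * ⟪u y, u' y⟫) + k * (2 * y - a - b))
    (f'' := fun y => l * (2 * (⟪u y, u'' y⟫ + ‖u' y‖ ^ 2)) + k * 2) (by fun_prop) ?_ ?_ ?_
    <;> rw [interior_Icc] <;> intro y hy
  · have hquad : HasDerivAt (fun z => (z - a) * (z - b)) (2 * y - a - b) y :=
      (((hasDerivAt_id' y).sub_const a).fun_mul ((hasDerivAt_id' y).sub_const b)).congr_deriv
        (by ring)
    exact (((hu' y hy).norm_sq.const_mul l).fun_add (hquad.const_mul k)).hasDerivWithinAt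
  · have hlin : HasDerivAt (fun z => 2 * z - a - b) 2 y := by
      simpa using (((hasDerivAt_id' y).const_mul 2).sub_const a).sub_const b
    exact (((hasDerivAt_two_mul_inner_deriv (hu' y hy) (hu'' y hy)).const_mul l).fun_add
      (hlin.const_mul k)).hasDerivWithinAt
  · linarith [hk y hy, mul_nonneg hl (sq_nonneg ‖u' y‖)]

theorem eq_zero_of_neg_mul_norm_sq_le_inner {l C : ℝ} (hC : 0 ≤ C) (hl : C * (b - a) ^ 2 < 4 * l)
    (hu : ContinuousOn u (Icc a b))
    (hu' : ∀ y ∈ Ioo a b, HasDerivAt u (u' y) y)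
    (hu'' : ∀ y ∈ Ioo a b, HasDerivAt u' (u'' y) y)
    (hle : ∀ y ∈ Ioo a b, -(C * ‖u y‖ ^ 2) ≤ l * ⟪u y, u'' y⟫)
    (ha : u a = 0) (hb : u b = 0) {y : ℝ} (hy : y ∈ Icc a b) : u y = 0 := by
  obtain ⟨y₀, hy₀, hmax⟩ := isCompact_Icc.exists_isMaxOn ⟨y, hy⟩ (hu.norm.pow 2)
  set m := ‖u y₀‖ ^ 2 with hm
  have hbound : ∀ z ∈ Icc a b, ‖u z‖ ^ 2 ≤ m := fun z hz => hmax hz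
  have hab : a ≤ b := hy.1.trans hy.2
  have hl₀ : 0 ≤ l := by linarith [mul_nonneg hC (sq_nonneg (b - a))]
  have hconv : ConvexOn ℝ (Icc a b) fun z => l * ‖u z‖ ^ 2 + C * m * ((z - a) * (z - b)) := by
    refine convexOn_mul_norm_sq_add_mul hl₀ hu hu' hu'' fun z hz => ?_
    have hCm := mul_le_mul_of_nonneg_left (hbound z (Ioo_subset_Icc_self hz)) hC
    exact (neg_le_neg hCm).trans (hle z hz)
  have hend : l * m + C * m * ((y₀ - a) * (y₀ - b)) ≤ 0 := by
    simpa [ha, hb, ← hm] using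
      hconv.le_max_of_mem_Icc (left_mem_Icc.2 hab) (right_mem_Icc.2 hab) hy₀
  have hquad : C * m * ((y₀ - a) * (b - y₀)) ≤ C * m * ((b - a) ^ 2 / 4) := by
    refine mul_le_mul_of_nonneg_left ?_ (by positivity)
    linarith [sq_nonneg (2 * y₀ - a - b)]
  have hm₀ : m ≤ 0 := by
    by_contra! hpos
    linarith [mul_lt_mul_of_pos_right hl hpos]
  simpa using (hbound y hy).trans hm₀

end Curves

/-- `u` is a classical solution of the semilinear system `l u'' = F(u)` on `(a, b)`, continuous up
to the endpoints. The derivatives are existential witnesses, constrained only in the interior. -/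
def IsClassicalSolution (l : ℝ) (F : E → E) (a b : ℝ) (u : ℝ → E) : Prop :=
  ContinuousOn u (Icc a b) ∧ ∃ u' u'' : ℝ → E, ∀ y ∈ Ioo a b,
    HasDerivAt u (u' y) y ∧ HasDerivAt u' (u'' y) y ∧ l • u'' y = F (u y)

namespace IsClassicalSolution

variable {l a b : ℝ} {F : E → E} {u v : ℝ → E}

theorem mapsTo_closedBall {ρ : ℝ} (hu : IsClassicalSolution l F a b u) (hl : 0 < l)
    (hF : ∀ x, ρ < ‖x‖ → 0 < ⟪x, F x⟫) (ha : ‖u a‖ ≤ ρ) (hb : ‖u b‖ ≤ ρ) :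
    MapsTo u (Icc a b) (closedBall 0 ρ) := by
  obtain ⟨hcont, u', u'', h⟩ := hu
  intro y hy
  rw [mem_closedBall_zero_iff]
  refine norm_le_of_inner_deriv_deriv_pos hcont (fun z hz => (h z hz).1) (fun z hz => (h z hz).2.1)
    (fun z hz hlt => ?_) ha hb hy
  have hpos := hF (u z) hlt
  rw [← (h z hz).2.2, real_inner_smul_right] at hpos
  exact pos_of_mul_pos_right hpos hl.le

theorem eqOn_of_one_sided_lipschitz {C : ℝ} {s : Set E} (hu : IsClassicalSolution l F a b u)
    (hv : IsClassicalSolution l F a b v) (hus : MapsTo u (Icc a b) s) (hvs : MapsTo v (Icc a b) s)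
    (hF : ∀ x ∈ s, ∀ y ∈ s, -(C * ‖x - y‖ ^ 2) ≤ ⟪x - y, F x - F y⟫)
    (hC : 0 ≤ C) (hl : C * (b - a) ^ 2 < 4 * l) (ha : u a = v a) (hb : u b = v b) :
    EqOn u v (Icc a b) := by
  obtain ⟨hu₀, u', u'', hu⟩ := hu
  obtain ⟨hv₀, v', v'', hv⟩ := hv
  intro y hy
  rw [← sub_eq_zero]
  refine eq_zero_of_neg_mul_norm_sq_le_inner (u := u - v) hC hl (hu₀.sub hv₀)
    (fun z hz => (hu z hz).1.sub (hv z hz).1) (fun z hz => (hu z hz).2.1.sub (hv z hz).2.1)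
    (fun z hz => ?_) (sub_eq_zero.2 ha) (sub_eq_zero.2 hb) hy
  have hz' := Ioo_subset_Icc_self hz
  have hlip := hF (u z) (hus hz') (v z) (hvs hz')
  rwa [← (hu z hz).2.2, ← (hv z hz).2.2, ← smul_sub, real_inner_smul_right] at hlip

end IsClassicalSolution

theorem inner_sub_norm_sq_smul_sub_nonneg (x y : E) :
    0 ≤ ⟪x - y, ‖x‖ ^ 2 • x - ‖y‖ ^ 2 • y⟫ := by
  have hsub := norm_sub_sq_real x y
  have hinner : ⟪x - y, ‖x‖ ^ 2 • x - ‖y‖ ^ 2 • y⟫ =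
      ((‖x‖ ^ 2 + ‖y‖ ^ 2) * ‖x - y‖ ^ 2 + (‖x‖ ^ 2 - ‖y‖ ^ 2) ^ 2) / 2 := by
    rw [hsub]
    simp only [inner_sub_left, inner_sub_right, real_inner_smul_right, real_inner_self_eq_norm_sq,
      real_inner_comm x y]
    ring
  rw [hinner]
  positivity

/-- The gradient `(‖x‖² - 1) x` of the Ginzburg–Landau double-well potential `(‖x‖² - 1)² / 4`. -/
def ginzburgLandau (x : E) : E := (‖x‖ ^ 2 - 1) • x

theorem inner_ginzburgLandau_self (x : E) : ⟪x, ginzburgLandau x⟫ = (‖x‖ ^ 2 - 1) * ‖x‖ ^ 2 := by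
  rw [ginzburgLandau, real_inner_smul_right, real_inner_self_eq_norm_sq]

theorem neg_norm_sub_sq_le_inner_ginzburgLandau_sub (x y : E) :
    -‖x - y‖ ^ 2 ≤ ⟪x - y, ginzburgLandau x - ginzburgLandau y⟫ := by
  have hsplit : ginzburgLandau x - ginzburgLandau y =
      (‖x‖ ^ 2 • x - ‖y‖ ^ 2 • y) - (x - y) := by
    simp only [ginzburgLandau, sub_smul, one_smul]
    abel
  rw [hsplit, inner_sub_right, real_inner_self_eq_norm_sq]
  linarith [inner_sub_norm_sq_smul_sub_nonneg x y]

end InnerProductSpace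

section FerroField

/-- The right-hand side of the ferronematic system in the complex order parameters
`Q = Q₁₁ + i Q₁₂` and `M = M₁ + i M₂`; the `L²` product carries the Euclidean norm of `ℝ⁴`. -/
noncomputable def ferroField (c : ℝ) (x : WithLp 2 (ℂ × ℂ)) : WithLp 2 (ℂ × ℂ) :=
  WithLp.toLp 2 ((4 : ℝ) • ginzburgLandau x.fst - c • x.snd ^ 2,
    ginzburgLandau x.snd - (2 * c) • (x.fst * conj x.snd))

variable {c : ℝ}

theorem inner_ferroField_self (c : ℝ) (x : WithLp 2 (ℂ × ℂ)) :
    ⟪x, ferroField c x⟫ = 4 * ((‖x.fst‖ ^ 2 - 1) * ‖x.fst‖ ^ 2) + (‖x.snd‖ ^ 2 - 1) * ‖x.snd‖ ^ 2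
      - 3 * (c * ⟪x.fst, x.snd ^ 2⟫) := by
  have hcoupling : ⟪x.snd, x.fst * conj x.snd⟫ = ⟪x.fst, x.snd ^ 2⟫ := by
    simp only [Complex.inner, sq, Complex.mul_re, Complex.mul_im, Complex.conj_re, Complex.conj_im]
    ring
  simp only [WithLp.prod_inner_apply, ferroField, WithLp.ofLp_fst, WithLp.ofLp_snd, inner_sub_right,
    real_inner_smul_right, inner_ginzburgLandau_self, hcoupling]
  ring

theorem inner_ferroField_self_pos {x : WithLp 2 (ℂ × ℂ)} (hx : 5 + 4 * |c| < ‖x‖) :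
    0 < ⟪x, ferroField c x⟫ := by
  have hnorm : ‖x‖ ^ 2 = ‖x.fst‖ ^ 2 + ‖x.snd‖ ^ 2 := WithLp.prod_norm_sq_eq_of_L2 x
  have hcoupling : c * ⟪x.fst, x.snd ^ 2⟫ ≤ |c| * ‖x‖ ^ 3 := by
    calc c * ⟪x.fst, x.snd ^ 2⟫ ≤ |c * ⟪x.fst, x.snd ^ 2⟫| := le_abs_self _
      _ ≤ |c| * (‖x.fst‖ * ‖x.snd‖ ^ 2) := by
        rw [abs_mul, ← norm_pow]
        gcongr
        exact abs_real_inner_le_norm _ _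
      _ ≤ |c| * (‖x‖ * ‖x‖ ^ 2) := by
        gcongr
        · exact WithLp.norm_fst_le _ x
        · exact WithLp.norm_snd_le _ x
      _ = |c| * ‖x‖ ^ 3 := by ring
  have hquartic : 4 / 5 * ‖x‖ ^ 4 ≤ 4 * ‖x.fst‖ ^ 4 + ‖x.snd‖ ^ 4 := by
    have hpow : ‖x‖ ^ 4 = (‖x.fst‖ ^ 2 + ‖x.snd‖ ^ 2) ^ 2 := by rw [← hnorm]; ring
    linarith [sq_nonneg (4 * ‖x.fst‖ ^ 2 - ‖x.snd‖ ^ 2)]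
  have hradius : 0 < ‖x‖ ^ 2 * (4 / 5 * ‖x‖ ^ 2 - 4 - 3 * |c| * ‖x‖) := by
    have hc := abs_nonneg c
    have hx₀ : 0 < ‖x‖ := by linarith
    refine mul_pos (by positivity) ?_
    nlinarith
  rw [inner_ferroField_self]
  linarith [sq_nonneg ‖x.snd‖]

theorem abs_inner_sq_sub_sq_le {ρ : ℝ} {p m n : ℂ} (hm : ‖m‖ ≤ ρ) (hn : ‖n‖ ≤ ρ) :
    |⟪p, m ^ 2 - n ^ 2⟫| ≤ 2 * ρ * (‖p‖ * ‖m - n‖) := by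
  calc |⟪p, m ^ 2 - n ^ 2⟫| ≤ ‖p‖ * ‖m ^ 2 - n ^ 2‖ := abs_real_inner_le_norm _ _
    _ = ‖p‖ * (‖m + n‖ * ‖m - n‖) := by rw [sq_sub_sq, norm_mul]
    _ ≤ ‖p‖ * ((ρ + ρ) * ‖m - n‖) := by gcongr; exact norm_add_le_of_le hm hn
    _ = 2 * ρ * (‖p‖ * ‖m - n‖) := by ring

theorem abs_inner_sub_mul_conj_sub_le {ρ : ℝ} {p q m n : ℂ} (hq : ‖q‖ ≤ ρ) (hm : ‖m‖ ≤ ρ) :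
    |⟪m - n, p * conj m - q * conj n⟫| ≤ ρ * (‖p - q‖ * ‖m - n‖ + ‖m - n‖ ^ 2) := by
  have hsplit : p * conj m - q * conj n = (p - q) * conj m + q * conj (m - n) := by
    rw [map_sub]
    ring
  calc |⟪m - n, p * conj m - q * conj n⟫|
      ≤ ‖m - n‖ * ‖(p - q) * conj m + q * conj (m - n)‖ := by
        rw [hsplit]
        exact abs_real_inner_le_norm _ _
    _ ≤ ‖m - n‖ * (‖p - q‖ * ‖m‖ + ‖q‖ * ‖m - n‖) := by
        gcongr
        exact (norm_add_le _ _).trans_eq (by simp only [norm_mul, RCLike.norm_conj])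
    _ ≤ ‖m - n‖ * (‖p - q‖ * ρ + ρ * ‖m - n‖) := by gcongr
    _ = ρ * (‖p - q‖ * ‖m - n‖ + ‖m - n‖ ^ 2) := by ring

theorem inner_sub_ferroField_sub (c : ℝ) (x y : WithLp 2 (ℂ × ℂ)) :
    ⟪x - y, ferroField c x - ferroField c y⟫ =
      4 * ⟪x.fst - y.fst, ginzburgLandau x.fst - ginzburgLandau y.fst⟫
        + ⟪x.snd - y.snd, ginzburgLandau x.snd - ginzburgLandau y.snd⟫
        - c * ⟪x.fst - y.fst, x.snd ^ 2 - y.snd ^ 2⟫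
        - 2 * (c * ⟪x.snd - y.snd, x.fst * conj x.snd - y.fst * conj y.snd⟫) := by
  simp only [WithLp.prod_inner_apply, ferroField, WithLp.ofLp_sub, Prod.fst_sub, Prod.snd_sub,
    WithLp.ofLp_fst, WithLp.ofLp_snd, inner_sub_right, real_inner_smul_right]
  ring

theorem neg_mul_norm_sub_sq_le_inner_ferroField_sub {ρ : ℝ} {x y : WithLp 2 (ℂ × ℂ)}
    (hx : ‖x‖ ≤ ρ) (hy : ‖y‖ ≤ ρ) :
    -((4 + 4 * |c| * ρ) * ‖x - y‖ ^ 2) ≤ ⟪x - y, ferroField c x - ferroField c y⟫ := by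
  have hm : ‖x.snd‖ ≤ ρ := (WithLp.norm_snd_le _ x).trans hx
  have hn : ‖y.snd‖ ≤ ρ := (WithLp.norm_snd_le _ y).trans hy
  have hp : ‖y.fst‖ ≤ ρ := (WithLp.norm_fst_le _ y).trans hy
  have hnorm : ‖x - y‖ ^ 2 = ‖x.fst - y.fst‖ ^ 2 + ‖x.snd - y.snd‖ ^ 2 :=
    WithLp.prod_norm_sq_eq_of_L2 (x - y)
  have hscale : ∀ {s t : ℝ}, |s| ≤ t → c * s ≤ |c| * t := fun {s t} h =>
    (le_abs_self _).trans ((abs_mul c s).trans_le (by gcongr))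
  have hcouplingQ := hscale (abs_inner_sq_sub_sq_le (p := x.fst - y.fst) hm hn)
  have hcouplingM := hscale
    (abs_inner_sub_mul_conj_sub_le (p := x.fst) (n := y.snd) hp hm)
  have hρ : 0 ≤ ρ := (norm_nonneg x).trans hx
  have hyoung : 0 ≤ |c| * ρ * (‖x.fst - y.fst‖ - ‖x.snd - y.snd‖) ^ 2 := by positivity
  have hfst : 0 ≤ |c| * ρ * ‖x.fst - y.fst‖ ^ 2 := by positivity
  rw [inner_sub_ferroField_sub, hnorm]
  linarith [neg_norm_sub_sq_le_inner_ginzburgLandau_sub x.fst y.fst,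
    neg_norm_sub_sq_le_inner_ginzburgLandau_sub x.snd y.snd, sq_nonneg ‖x.snd - y.snd‖]

end FerroField

/-- The linear identification of `((Q₁₁, Q₁₂), (M₁, M₂))` with the complex order parameters
`(Q₁₁ + i Q₁₂, M₁ + i M₂)`. -/
noncomputable def orderParameter : ((ℝ × ℝ) × ℝ × ℝ) ≃L[ℝ] WithLp 2 (ℂ × ℂ) :=
  (Complex.equivRealProdCLM.symm.prodCongr Complex.equivRealProdCLM.symm).trans
    (WithLp.prodContinuousLinearEquiv 2 ℝ ℂ ℂ).symm

theorem orderParameter_apply (q₁ q₂ m₁ m₂ : ℝ) :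
    orderParameter ((q₁, q₂), (m₁, m₂)) = WithLp.toLp 2 (⟨q₁, q₂⟩, ⟨m₁, m₂⟩) := rfl

theorem norm_sq_orderParameter (q₁ q₂ m₁ m₂ : ℝ) :
    ‖orderParameter ((q₁, q₂), (m₁, m₂))‖ ^ 2 = q₁ ^ 2 + q₂ ^ 2 + (m₁ ^ 2 + m₂ ^ 2) := by
  simp only [orderParameter_apply, WithLp.prod_norm_sq_eq_of_L2, WithLp.toLp_fst, WithLp.toLp_snd,
    Complex.sq_norm, Complex.normSq_mk]
  ring

theorem ferroField_orderParameter (c q₁ q₂ m₁ m₂ : ℝ) :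
    ferroField c (orderParameter ((q₁, q₂), (m₁, m₂))) = orderParameter
      ((4 * q₁ * (q₁ ^ 2 + q₂ ^ 2 - 1) - c * (m₁ ^ 2 - m₂ ^ 2),
        4 * q₂ * (q₁ ^ 2 + q₂ ^ 2 - 1) - 2 * c * m₁ * m₂),
       (m₁ * (m₁ ^ 2 + m₂ ^ 2 - 1) - 2 * c * q₁ * m₁ - 2 * c * q₂ * m₂,
        m₂ * (m₁ ^ 2 + m₂ ^ 2 - 1) + 2 * c * q₁ * m₂ - 2 * c * q₂ * m₁)) := by
  refine WithLp.ofLp_injective 2 (Prod.ext ?_ ?_) <;> apply Complex.ext <;>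
    simp [orderParameter_apply, ferroField, ginzburgLandau, Complex.sq_norm, Complex.normSq_mk,
      pow_two (⟨m₁, m₂⟩ : ℂ)] <;> ring

namespace FerroSolution

variable {l c : ℝ} {Q11 Q12 M1 M2 : ℝ → ℝ}

theorem isClassicalSolution (h : FerroSolution l c Q11 Q12 M1 M2) :
    IsClassicalSolution l (ferroField c) (-1) 1
      fun y => orderParameter ((Q11 y, Q12 y), (M1 y, M2 y)) := by
  obtain ⟨hQ11, hQ12, hM1, hM2, eQ11, eQ12, eM1, eM2, -⟩ := h
  refine ⟨orderParameter.continuous.comp_continuousOn ((hQ11.continuousOn.prodMk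
      hQ12.continuousOn).prodMk (hM1.continuousOn.prodMk hM2.continuousOn)),
    fun y => orderParameter ((deriv Q11 y, deriv Q12 y), (deriv M1 y, deriv M2 y)),
    fun y => orderParameter ((deriv (deriv Q11) y, deriv (deriv Q12) y),
      (deriv (deriv M1) y, deriv (deriv M2) y)), fun y hy => ?_⟩
  have hderiv : ∀ {f : ℝ → ℝ}, ContDiffOn ℝ 2 f (Icc (-1) 1) →
      HasDerivAt f (deriv f y) y ∧ HasDerivAt (deriv f) (deriv (deriv f) y) y := fun hf =>
    have hfy := hf.contDiffAt (Icc_mem_nhds hy.1 hy.2)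
    ⟨(hfy.differentiableAt two_ne_zero).hasDerivAt, hasDerivAt_deriv_of_contDiffAt_two hfy⟩
  refine ⟨orderParameter.hasFDerivAt.comp_hasDerivAt y
      (((hderiv hQ11).1.prodMk (hderiv hQ12).1).prodMk ((hderiv hM1).1.prodMk (hderiv hM2).1)),
    orderParameter.hasFDerivAt.comp_hasDerivAt y
      (((hderiv hQ11).2.prodMk (hderiv hQ12).2).prodMk ((hderiv hM1).2.prodMk (hderiv hM2).2)), ?_⟩
  simp only [ferroField_orderParameter, ← map_smul, Prod.smul_mk, smul_eq_mul, eQ11 y hy, eQ12 y hy,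
    eM1 y hy, eM2 y hy]

theorem orderParameter_left (h : FerroSolution l c Q11 Q12 M1 M2) :
    orderParameter ((Q11 (-1), Q12 (-1)), (M1 (-1), M2 (-1))) =
      orderParameter ((1, 0), (1, 0)) := by
  obtain ⟨-, -, -, -, -, -, -, -, hQ11, hM1, -, -, hQ12, -, hM2, -⟩ := h
  rw [hQ11, hM1, hQ12, hM2]

theorem orderParameter_right (h : FerroSolution l c Q11 Q12 M1 M2) :
    orderParameter ((Q11 1, Q12 1), (M1 1, M2 1)) = orderParameter ((-1, 0), (-1, 0)) := by
  obtain ⟨-, -, -, -, -, -, -, -, -, -, hQ11, hM1, -, hQ12, -, hM2⟩ := h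
  rw [hQ11, hM1, hQ12, hM2]

theorem mapsTo_closedBall (h : FerroSolution l c Q11 Q12 M1 M2) (hl : 0 < l) :
    MapsTo (fun y => orderParameter ((Q11 y, Q12 y), (M1 y, M2 y))) (Icc (-1) 1)
      (closedBall 0 (5 + 4 * |c|)) := by
  have hradius : 2 ≤ (5 + 4 * |c|) ^ 2 := by nlinarith [abs_nonneg c]
  have hnorm : ∀ z : WithLp 2 (ℂ × ℂ), ‖z‖ ^ 2 = 2 → ‖z‖ ≤ 5 + 4 * |c| := fun z hz =>
    (sq_le_sq₀ (norm_nonneg z) (by positivity)).1 (hz.trans_le hradius)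
  refine h.isClassicalSolution.mapsTo_closedBall hl (fun _ => inner_ferroField_self_pos)
    (hnorm _ ?_) (hnorm _ ?_)
  · rw [h.orderParameter_left, norm_sq_orderParameter]
    norm_num
  · rw [h.orderParameter_right, norm_sq_orderParameter]
    norm_num

end FerroSolution

theorem ferro_uniqueness_large_l_general (c : ℝ) :
    ∃ lstar : ℝ, 0 < lstar ∧ ∀ l : ℝ, lstar < l →
      ∀ Q11 Q12 M1 M2 Q11' Q12' M1' M2' : ℝ → ℝ,
        FerroSolution l c Q11 Q12 M1 M2 →
        FerroSolution l c Q11' Q12' M1' M2' →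
        ∀ y ∈ Icc (-1 : ℝ) 1,
          Q11 y = Q11' y ∧ Q12 y = Q12' y ∧ M1 y = M1' y ∧ M2 y = M2' y := by
  have hC : 0 < 4 + 4 * |c| * (5 + 4 * |c|) := by positivity
  refine ⟨4 + 4 * |c| * (5 + 4 * |c|), hC, fun l hl Q11 Q12 M1 M2 Q11' Q12' M1' M2' h h' y hy => ?_⟩
  have hl₀ : 0 < l := hC.trans hl
  have heq := h.isClassicalSolution.eqOn_of_one_sided_lipschitz h'.isClassicalSolution
    (h.mapsTo_closedBall hl₀) (h'.mapsTo_closedBall hl₀)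
    (fun x hx z hz => neg_mul_norm_sub_sq_le_inner_ferroField_sub
      (mem_closedBall_zero_iff.1 hx) (mem_closedBall_zero_iff.1 hz))
    hC.le (by linarith) (h.orderParameter_left.trans h'.orderParameter_left.symm)
    (h.orderParameter_right.trans h'.orderParameter_right.symm) hy
  simpa only [orderParameter.injective.eq_iff, Prod.mk.injEq, and_assoc] using heq

/-- Uniqueness of the critical point for sufficiently large elastic constant: for
every `c > 0` there exists `l*(c) > 0` such that for all `l > l*(c)` any two
classical solutions of the ferronematic boundary-value problem coincide. -/
theorem ferro_uniqueness_large_l (c : ℝ) (hc : 0 < c) :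
    ∃ lstar : ℝ, 0 < lstar ∧ ∀ l : ℝ, lstar < l →
      ∀ Q11 Q12 M1 M2 Q11' Q12' M1' M2' : ℝ → ℝ,
        FerroSolution l c Q11 Q12 M1 M2 →
        FerroSolution l c Q11' Q12' M1' M2' →
        ∀ y ∈ Icc (-1 : ℝ) 1,
          Q11 y = Q11' y ∧ Q12 y = Q12' y ∧ M1 y = M1' y ∧ M2 y = M2' y :=
  ferro_uniqueness_large_l_general c
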